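/- arXiv:2408.10651 — 3 statements merged into one kernel-verified Lean document; each statement's English description precedes it below -/
import Mathlib

section
/- For all natural numbers r ≥ 2 and m with r dividing m, there exists an edge-coloured graph G on (r²−2)m vertices with minimum colour degree (r²−r−1)m − 1 that contains no perfect rainbow-K_r-tiling, i.e., no partition of its vertex set into vertex-disjoint rainbow copies of the complete graph K_r. -/
/-!
Split the vertices into a core `A`, divided into `r - 1` parts of size `m`, a set `C` of size
`(r - 2) m + 1` and a set `B` of size `(r - 1) ^ 2 m - 1`. Remove all edges inside the parts of `A`
and all edges between `A` and `C`. Give each edge between `A` and `B` the colour of its endpoint in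
`B`, and each other edge its own colour.

A rainbow `K_r` that meets `A` avoids `C`. It cannot lie inside the `(r - 1)`-partite `A`, so it
contains a vertex of `B`, and then two vertices of `A` would see that vertex in the same colour.
Hence it has one vertex in `A` and `r - 1` in `B`, so a perfect tiling would need
`(r - 1) |A| ≤ |B|`, whereas `|B| = (r - 1) |A| - 1`.
-/

open Finset

section RainbowTiling

variable {V κ κ' : Type*}

/-- The colour degree of `v`: the number of colours that appear on the edges of `G` at `v`. The
colouring `c` is a function on all pairs, of which only the values on edges matter. -/
noncomputable def colorDegree (G : SimpleGraph V) (c : V → V → κ) (v : V) : ℕ :=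
  Set.ncard (c v '' {w | G.Adj v w})

/-- `S` spans a rainbow copy of `K_r`. The edges of the clique are compared as two-element finsets,
so that `xy` and `yx` count as the same edge. -/
def IsRainbowClique [DecidableEq V] (G : SimpleGraph V) (c : V → V → κ) (r : ℕ)
    (S : Finset V) : Prop :=
  #S = r ∧ (∀ x ∈ S, ∀ y ∈ S, x ≠ y → G.Adj x y) ∧
    ∀ x ∈ S, ∀ y ∈ S, ∀ x' ∈ S, ∀ y' ∈ S, x ≠ y → x' ≠ y' →
      ({x, y} : Finset V) ≠ {x', y'} → c x y ≠ c x' y'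

/-- `T` is a perfect rainbow-`K_r`-tiling: its members are disjoint rainbow copies of `K_r`, given
by their vertex sets, that cover every vertex. -/
def IsPerfectRainbowTiling [DecidableEq V] (G : SimpleGraph V) (c : V → V → κ) (r : ℕ)
    (T : Finset (Finset V)) : Prop :=
  (∀ S ∈ T, IsRainbowClique G c r S) ∧ (∀ S ∈ T, ∀ S' ∈ T, S ≠ S' → Disjoint S S') ∧
    ∀ v, ∃ S ∈ T, v ∈ S

variable {G : SimpleGraph V} {c : V → V → κ}

lemma colorDegree_comp {f : κ → κ'} (hf : f.Injective) (v : V) :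
    colorDegree G (fun u w ↦ f (c u w)) v = colorDegree G c v := by
  rw [colorDegree, ← Set.image_image f (c v), Set.ncard_image_of_injective _ hf, colorDegree]

lemma card_le_colorDegree [Finite V] {v : V} {W : Finset V} (hadj : ∀ w ∈ W, G.Adj v w)
    (hinj : Set.InjOn (c v) W) : #W ≤ colorDegree G c v := by
  rw [← Set.ncard_coe_finset, ← hinj.ncard_image]
  exact Set.ncard_le_ncard (Set.image_mono hadj)

lemma colorDegree_le_card {v : V} {W : Finset V} (hadj : ∀ w, G.Adj v w → w ∈ W) :
    colorDegree G c v ≤ #W := by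
  have hfin : {w | G.Adj v w}.Finite := W.finite_toSet.subset hadj
  rw [← Set.ncard_coe_finset]
  exact (Set.ncard_image_le hfin).trans (Set.ncard_le_ncard hadj)

variable [DecidableEq V] {r : ℕ} {T : Finset (Finset V)}

lemma IsPerfectRainbowTiling.of_comp {f : κ → κ'}
    (hT : IsPerfectRainbowTiling G (fun u v ↦ f (c u v)) r T) : IsPerfectRainbowTiling G c r T := by
  refine ⟨fun S hS ↦ ?_, hT.2⟩
  obtain ⟨hcard, hclique, hrainbow⟩ := hT.1 S hS
  exact ⟨hcard, hclique, fun x hx y hy x' hx' y' hy' hxy hxy' hne heq ↦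
    hrainbow x hx y hy x' hx' y' hy' hxy hxy' hne (congrArg f heq)⟩

lemma IsPerfectRainbowTiling.sum_card_inter (hT : IsPerfectRainbowTiling G c r T) (A : Finset V) :
    ∑ S ∈ T, #(A ∩ S) = #A := by
  obtain ⟨-, hdisj, hcover⟩ := hT
  have hunique (v : V) : #{S ∈ T | v ∈ S} = 1 := by
    obtain ⟨S, hS, hvS⟩ := hcover v
    refine card_eq_one.2 ⟨S, eq_singleton_iff_unique_mem.2
      ⟨mem_filter.2 ⟨hS, hvS⟩, fun S' hS' ↦ ?_⟩⟩
    obtain ⟨hS', hvS'⟩ := mem_filter.1 hS'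
    by_contra hne
    exact disjoint_left.1 (hdisj S' hS' S hS hne) hvS' hvS
  rw [Finset.sum_card_inter fun v _ ↦ hunique v, mul_one]

end RainbowTiling

/-- The place of a vertex in the extremal construction: `core i` is the `i`-th part of `A`, `far`
is the set `C` that is not joined to `A`, and `hub` is the set `B` whose vertices determine the
colours of their edges to `A`. -/
inductive Role (ι : Type*)
  | core (i : ι)
  | far
  | hub
  deriving DecidableEq

namespace Role

variable {V ι : Type*}

/-- The roles whose vertices are joined by an edge: all pairs other than two vertices in the same
part of the core, or a core vertex and a far vertex. -/
def Joined : Role ι → Role ι → Prop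
  | core i, core j => i ≠ j
  | core _, far => False
  | far, core _ => False
  | _, _ => True

lemma Joined.symm {x y : Role ι} (h : Joined x y) : Joined y x := by
  cases x <;> cases y <;> first | exact Ne.symm h | exact h

lemma joined_core_iff {i : ι} {x : Role ι} : Joined (core i) x ↔ x ≠ core i ∧ x ≠ far := by
  cases x <;> simp [Joined, eq_comm]

lemma joined_of_ne_core {x y : Role ι} (hx : ∀ i, x ≠ core i) (hy : ∀ i, y ≠ core i) :
    Joined x y := by
  cases x <;> cases y <;> simp_all [Joined]

/-- The graph of the extremal construction, for an assignment `ℓ` of roles to the vertices. -/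
def graph (ℓ : V → Role ι) : SimpleGraph V where
  Adj u v := u ≠ v ∧ Joined (ℓ u) (ℓ v)
  symm := ⟨fun _ _ h ↦ ⟨h.1.symm, h.2.symm⟩⟩
  loopless := ⟨fun _ h ↦ h.1 rfl⟩

/-- The colouring of the extremal construction. The diagonal elements of `Sym2 V` are not edges, so
`s(v, v)` is free to serve as the colour of the edges between the core and the hub vertex `v`. -/
def coloring (ℓ : V → Role ι) (u v : V) : Sym2 V :=
  match ℓ u, ℓ v with
  | core _, hub => s(v, v)
  | hub, core _ => s(u, u)
  | _, _ => s(u, v)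

lemma coloring_comm (ℓ : V → Role ι) (u v : V) : coloring ℓ u v = coloring ℓ v u := by
  unfold coloring
  cases ℓ u <;> cases ℓ v <;> first | rfl | exact Sym2.eq_swap

lemma coloring_of_core_of_hub {ℓ : V → Role ι} {u v : V} {i : ι} (hu : ℓ u = core i)
    (hv : ℓ v = hub) : coloring ℓ u v = s(v, v) := by
  simp only [coloring, hu, hv]

lemma coloring_injective_of_core {ℓ : V → Role ι} {v : V} {i : ι} (hv : ℓ v = core i) :
    (coloring ℓ v).Injective := by
  intro w w' h
  simp only [coloring, hv] at h
  cases hw : ℓ w <;> cases hw' : ℓ w' <;> simp only [hw, hw', Sym2.eq_iff] at h <;> grind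

lemma coloring_of_ne_core {ℓ : V → Role ι} {v w : V} (hv : ∀ i, ℓ v ≠ core i)
    (hw : ∀ i, ℓ w ≠ core i) : coloring ℓ v w = s(v, w) := by
  unfold coloring
  cases hv' : ℓ v <;> cases hw' : ℓ w <;> grind

variable [Fintype V] [DecidableEq ι]

/-- The vertices that have the role `x`. -/
def verts (ℓ : V → Role ι) (x : Role ι) : Finset V := {v | ℓ v = x}

@[simp]
lemma mem_verts {ℓ : V → Role ι} {x : Role ι} {v : V} : v ∈ verts ℓ x ↔ ℓ v = x := by
  simp [verts]

lemma disjoint_verts {ℓ : V → Role ι} {x y : Role ι} (h : x ≠ y) :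
    Disjoint (verts ℓ x) (verts ℓ y) :=
  disjoint_left.2 fun _ hx hy ↦ h ((mem_verts.1 hx).symm.trans (mem_verts.1 hy))

lemma card_sub_le_colorDegree_of_core {ℓ : V → Role ι} {v : V} {i : ι} (hv : ℓ v = core i) :
    Fintype.card V - (#(verts ℓ (core i)) + #(verts ℓ far)) ≤
      colorDegree (graph ℓ) (coloring ℓ) v := by
  classical
  rw [← card_union_of_disjoint (disjoint_verts (by simp)), ← card_compl]
  refine card_le_colorDegree (fun w hw ↦ ?_) (coloring_injective_of_core hv).injOn
  simp only [mem_compl, mem_union, mem_verts, not_or] at hw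
  exact ⟨fun h ↦ hw.1 (h ▸ hv), hv ▸ joined_core_iff.2 hw⟩

variable [Fintype ι]

/-- The vertices of the core, over all of its parts. -/
def coreVerts (ℓ : V → Role ι) : Finset V := {v | ∃ i, ℓ v = core i}

@[simp]
lemma mem_coreVerts {ℓ : V → Role ι} {v : V} : v ∈ coreVerts ℓ ↔ ∃ i, ℓ v = core i := by
  simp [coreVerts]

lemma exists_card_verts_eq {m s t : ℕ} (h : Fintype.card V = Fintype.card ι * m + (s + t)) :
    ∃ ℓ : V → Role ι, (∀ i, #(verts ℓ (core i)) = m) ∧ #(verts ℓ far) = s ∧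
      #(verts ℓ hub) = t ∧ #(coreVerts ℓ) = Fintype.card ι * m := by
  have e : V ≃ (ι × Fin m) ⊕ (Fin s ⊕ Fin t) :=
    Fintype.equivOfCardEq (by simp only [h, Fintype.card_sum, Fintype.card_prod, Fintype.card_fin])
  let role : (ι × Fin m) ⊕ (Fin s ⊕ Fin t) → Role ι :=
    Sum.elim (fun p ↦ core p.1) (Sum.elim (fun _ ↦ far) fun _ ↦ hub)
  have hcard (p : Role ι → Prop) [DecidablePred p] :
      #{v | p (role (e v))} = (∑ q : ι × Fin m, if p (core q.1) then 1 else 0) +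
        ((∑ _ : Fin s, if p far then 1 else 0) + ∑ _ : Fin t, if p hub then 1 else 0) := by
    rw [card_filter, e.sum_comp fun x ↦ if p (role x) then 1 else 0, Fintype.sum_sum_type,
      Fintype.sum_sum_type]
    rfl
  refine ⟨fun v ↦ role (e v), fun i ↦ (hcard (· = core i)).trans ?_, (hcard (· = far)).trans ?_,
      (hcard (· = hub)).trans ?_, (hcard (∃ i, · = core i)).trans ?_⟩ <;>
    simp [Fintype.sum_prod_type_right, -sum_boole]

section ColorDegree

variable {ℓ : V → Role ι} {v : V}

lemma card_sub_le_colorDegree_of_ne_core (hv : ∀ i, ℓ v ≠ core i) :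
    Fintype.card V - (#(coreVerts ℓ) + 1) ≤ colorDegree (graph ℓ) (coloring ℓ) v := by
  classical
  rw [← card_insert_of_notMem (a := v) (by simpa using hv), ← card_compl]
  have hmem {w : V} (hw : w ∈ (insert v (coreVerts ℓ))ᶜ) : w ≠ v ∧ ∀ i, ℓ w ≠ core i := by
    simpa using hw
  refine card_le_colorDegree (fun w hw ↦ ⟨(hmem hw).1.symm, joined_of_ne_core hv (hmem hw).2⟩)
    fun w hw w' hw' h ↦ ?_
  rw [coloring_of_ne_core hv (hmem hw).2, coloring_of_ne_core hv (hmem hw').2] at h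
  exact Sym2.congr_right.1 h

lemma colorDegree_le_of_far (hv : ℓ v = far) :
    colorDegree (graph ℓ) (coloring ℓ) v ≤ Fintype.card V - (#(coreVerts ℓ) + 1) := by
  classical
  rw [← card_insert_of_notMem (a := v) (s := coreVerts ℓ) (by simp [hv]), ← card_compl]
  refine colorDegree_le_card fun w ⟨hne, hjoin⟩ ↦ ?_
  simp only [mem_compl, mem_insert, mem_coreVerts, not_or, not_exists]
  refine ⟨hne.symm, fun i hw ↦ ?_⟩
  rw [hv, hw] at hjoin
  exact (joined_core_iff.1 hjoin.symm).2 rfl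

lemma card_sub_le_colorDegree
    (h : ∀ i, #(verts ℓ (core i)) + #(verts ℓ far) ≤ #(coreVerts ℓ) + 1) (v : V) :
    Fintype.card V - (#(coreVerts ℓ) + 1) ≤ colorDegree (graph ℓ) (coloring ℓ) v := by
  by_cases hv : ∃ i, ℓ v = core i
  · obtain ⟨i, hv⟩ := hv
    exact (Nat.sub_le_sub_left (h i) _).trans (card_sub_le_colorDegree_of_core hv)
  · exact card_sub_le_colorDegree_of_ne_core (not_exists.1 hv)

end ColorDegree

section Tiling

variable {ℓ : V → Role ι} {r : ℕ} {S : Finset V}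

lemma card_le_of_isClique_of_subset_coreVerts (hS : (graph ℓ).IsClique S)
    (hcore : S ⊆ coreVerts ℓ) : #S ≤ Fintype.card ι := by
  have hmaps : Set.MapsTo ℓ S (univ.image core : Finset (Role ι)) := fun v hv ↦ by
    simpa [eq_comm] using hcore hv
  have hinj : Set.InjOn ℓ S := fun u hu v hv huv ↦ by
    obtain ⟨i, hi⟩ := mem_coreVerts.1 (hcore hu)
    by_contra hne
    have hjoin := (hS hu hv hne).2
    rw [← huv, hi] at hjoin
    exact (joined_core_iff.1 hjoin).1 rfl
  exact (card_le_card_of_injOn ℓ hmaps hinj).trans card_image_le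

variable [DecidableEq V]

lemma card_coreVerts_inter_le_one (hS : IsRainbowClique (graph ℓ) (coloring ℓ) r S) {z : V}
    (hz : z ∈ S) (hhub : ℓ z = hub) : #(coreVerts ℓ ∩ S) ≤ 1 := by
  refine card_le_one.2 fun u hu v hv ↦ ?_
  obtain ⟨⟨i, hi⟩, hu⟩ := by simpa using hu
  obtain ⟨⟨j, hj⟩, hv⟩ := by simpa using hv
  by_contra hne
  have huz : u ≠ z := by rintro rfl; simp [hi] at hhub
  have hvz : v ≠ z := by rintro rfl; simp [hj] at hhub
  have hedges : ({u, z} : Finset V) ≠ {v, z} := fun h ↦ by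
    have : u ∈ ({v, z} : Finset V) := h ▸ mem_insert_self u {z}
    simp [hne, huz] at this
  exact hS.2.2 u hu z hz v hv z hz huz hvz hedges <| by
    rw [coloring_of_core_of_hub hi hhub, coloring_of_core_of_hub hj hhub]

lemma subset_coreVerts_union_hub (hS : (graph ℓ).IsClique S) {x : V} (hx : x ∈ S)
    (hcore : x ∈ coreVerts ℓ) : S ⊆ coreVerts ℓ ∪ verts ℓ hub := by
  intro y hy
  obtain ⟨i, hi⟩ := mem_coreVerts.1 hcore
  cases hy' : ℓ y with
  | core j => simp [hy']
  | hub => simp [hy']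
  | far =>
    have hjoin := (hS hx hy (by rintro rfl; simp [hi] at hy')).2
    rw [hi, hy'] at hjoin
    exact absurd rfl (joined_core_iff.1 hjoin).2

lemma card_mul_card_coreVerts_inter_le
    (hS : IsRainbowClique (graph ℓ) (coloring ℓ) (Fintype.card ι + 1) S) :
    Fintype.card ι * #(coreVerts ℓ ∩ S) ≤ #(verts ℓ hub ∩ S) := by
  obtain hempty | ⟨x, hx⟩ := (coreVerts ℓ ∩ S).eq_empty_or_nonempty
  · simp [hempty]
  obtain ⟨hxA, hxS⟩ := mem_inter.1 hx
  have hsub := subset_coreVerts_union_hub hS.2.1 hxS hxA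
  have hnot : ¬ S ⊆ coreVerts ℓ := fun h ↦ by
    have := card_le_of_isClique_of_subset_coreVerts hS.2.1 h
    have := hS.1
    omega
  obtain ⟨z, hzS, hzA⟩ := not_subset.1 hnot
  have hhub : ℓ z = hub := mem_verts.1 ((mem_union.1 (hsub hzS)).resolve_left hzA)
  have hone : #(coreVerts ℓ ∩ S) ≤ 1 := card_coreVerts_inter_le_one hS hzS hhub
  have hcover : Fintype.card ι + 1 ≤ #(coreVerts ℓ ∩ S) + #(verts ℓ hub ∩ S) := by
    rw [← hS.1]
    refine le_trans (card_le_card ?_) (card_union_le _ _)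
    rw [← union_inter_distrib_right]
    exact subset_inter hsub subset_rfl
  calc Fintype.card ι * #(coreVerts ℓ ∩ S) ≤ Fintype.card ι := mul_le_of_le_one_right' hone
    _ ≤ #(verts ℓ hub ∩ S) := by omega

theorem not_isPerfectRainbowTiling (h : #(verts ℓ hub) < Fintype.card ι * #(coreVerts ℓ))
    (T : Finset (Finset V)) :
    ¬ IsPerfectRainbowTiling (graph ℓ) (coloring ℓ) (Fintype.card ι + 1) T := by
  refine fun hT ↦ h.not_ge ?_
  calc Fintype.card ι * #(coreVerts ℓ)
      = ∑ S ∈ T, Fintype.card ι * #(coreVerts ℓ ∩ S) := by rw [← mul_sum, hT.sum_card_inter]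
    _ ≤ ∑ S ∈ T, #(verts ℓ hub ∩ S) :=
        sum_le_sum fun S hS ↦ card_mul_card_coreVerts_inter_le (hT.1 S hS)
    _ = #(verts ℓ hub) := hT.sum_card_inter _

end Tiling

end Role

theorem exists_graph_coloring_not_exists_isPerfectRainbowTiling {V : Type*} [Fintype V]
    [DecidableEq V] {k m s t : ℕ} (hV : Fintype.card V = k * m + (s + t))
    (hs : 0 < s) (hms : m + s ≤ k * m + 1) (ht : t < k * (k * m)) :
    ∃ (G : SimpleGraph V) (c : V → V → ℕ), (∀ u v, c u v = c v u) ∧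
      (∀ v, Fintype.card V - (k * m + 1) ≤ colorDegree G c v) ∧
      (∃ v, colorDegree G c v = Fintype.card V - (k * m + 1)) ∧
      ¬ ∃ T, IsPerfectRainbowTiling G c (k + 1) T := by
  obtain ⟨ℓ, hpart, hfar, hhub, hcore⟩ :=
    Role.exists_card_verts_eq (ι := Fin k) (by simpa only [Fintype.card_fin] using hV)
  rw [Fintype.card_fin] at hcore
  obtain ⟨f, hf⟩ := Countable.exists_injective_nat (Sym2 V)
  have hlower (v : V) := Role.card_sub_le_colorDegree (ℓ := ℓ) (v := v) fun i ↦ by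
    rwa [hpart, hfar, hcore]
  obtain ⟨z, hz⟩ : (Role.verts ℓ Role.far).Nonempty := card_pos.1 (hfar ▸ hs)
  have hupper := Role.colorDegree_le_of_far (Role.mem_verts.1 hz)
  have htiling := Role.not_isPerfectRainbowTiling (ℓ := ℓ) (by rwa [hhub, hcore, Fintype.card_fin])
  simp only [Fintype.card_fin] at htiling
  rw [← hcore]
  refine ⟨Role.graph ℓ, fun u v ↦ f (Role.coloring ℓ u v),
    fun u v ↦ congrArg f (Role.coloring_comm ℓ u v), fun v ↦ ?_, ⟨z, ?_⟩,
    fun ⟨T, hT⟩ ↦ htiling T hT.of_comp⟩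
  · exact (hlower v).trans_eq (colorDegree_comp hf v).symm
  · exact (colorDegree_comp hf z).trans (hupper.antisymm (hlower z))

theorem stmt_3_general {V : Type*} [Fintype V] [DecidableEq V] {r m : ℕ} (hr : 2 ≤ r) (hm : 1 ≤ m)
    (hV : Fintype.card V = (r ^ 2 - 2) * m) :
    ∃ (G : SimpleGraph V) (c : V → V → ℕ), (∀ u v, c u v = c v u) ∧
      (∀ v, (r ^ 2 - r - 1) * m - 1 ≤ colorDegree G c v) ∧
      (∃ v, colorDegree G c v = (r ^ 2 - r - 1) * m - 1) ∧
      ¬ ∃ T, IsPerfectRainbowTiling G c r T := by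
  obtain ⟨k, rfl⟩ := Nat.exists_eq_add_of_le' hr
  have hsq : (k + 2) ^ 2 = k ^ 2 + 4 * k + 4 := by ring
  have hpos : 1 ≤ (k + 1) * ((k + 1) * m) := Nat.one_le_iff_ne_zero.2 (by positivity)
  rw [show (k + 2) ^ 2 - 2 = k ^ 2 + 4 * k + 2 by omega] at hV
  have hsize : Fintype.card V = (k + 1) * m + ((k * m + 1) + ((k + 1) * ((k + 1) * m) - 1)) := by
    zify [hV, hpos]
    ring
  have hdeg : ((k + 2) ^ 2 - (k + 2) - 1) * m - 1 = Fintype.card V - ((k + 1) * m + 1) := by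
    rw [show (k + 2) ^ 2 - (k + 2) - 1 = k ^ 2 + 3 * k + 1 by omega, hV,
      show (k ^ 2 + 4 * k + 2) * m = (k ^ 2 + 3 * k + 1) * m + (k + 1) * m by ring]
    omega
  rw [hdeg]
  exact exists_graph_coloring_not_exists_isPerfectRainbowTiling hsize (Nat.succ_pos _) (by linarith)
    (Nat.sub_one_lt_of_lt hpos)

/-- For `r ≥ 2` and `r ∣ m` there is an edge-coloured graph on `(r²-2)m` vertices with
minimum colour degree `(r²-r-1)m - 1` and no perfect rainbow-`K_r`-tiling. -/
theorem stmt_3 (r m : ℕ) (hr : 2 ≤ r) (hm0 : 1 ≤ m) (hm : r ∣ m) :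
    ∃ (G : SimpleGraph (Fin ((r ^ 2 - 2) * m)))
      (c : Fin ((r ^ 2 - 2) * m) → Fin ((r ^ 2 - 2) * m) → ℕ),
      (∀ u v, c u v = c v u) ∧
      (∀ v, (r ^ 2 - r - 1) * m - 1 ≤ Set.ncard ((c v) '' {w | G.Adj v w})) ∧
      (∃ v, Set.ncard ((c v) '' {w | G.Adj v w}) = (r ^ 2 - r - 1) * m - 1) ∧
      ¬ ∃ T : Finset (Finset (Fin ((r ^ 2 - 2) * m))),
        (∀ S ∈ T, S.card = r ∧
          (∀ x ∈ S, ∀ y ∈ S, x ≠ y → G.Adj x y) ∧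
          (∀ x ∈ S, ∀ y ∈ S, ∀ x' ∈ S, ∀ y' ∈ S, x ≠ y → x' ≠ y' →
            ({x, y} : Finset _) ≠ {x', y'} → c x y ≠ c x' y')) ∧
        (∀ S ∈ T, ∀ S' ∈ T, S ≠ S' → Disjoint S S') ∧
        (∀ v, ∃ S ∈ T, v ∈ S) :=
  stmt_3_general hr hm0 (Fintype.card_fin _)
end

section
/- Let G be a digraph on n vertices (n sufficiently large) in which every vertex has out-degree at least (2 + √(13/2) + γ)n/5 for some γ > 0. Then G contains a perfect fractional (4,2)-tiling. -/
/-- `S` spans a member of `K_{r,s}(G)`: `r` vertices, complete base graph and minimum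
out-degree at least `s` inside `S`. -/
def IsKrs {n : ℕ} (G : Fin n → Fin n → Prop) (r s : ℕ) (S : Finset (Fin n)) : Prop :=
  S.card = r ∧ (∀ x ∈ S, ∀ y ∈ S, x ≠ y → G x y ∨ G y x) ∧
    (∀ x ∈ S, s ≤ Set.ncard {y | y ∈ S ∧ G x y})

/-!
By linear programming duality, a perfect fractional tiling exists unless some `f : V → ℝ` has
nonnegative sum over every tile and negative total sum. Let `v` minimize such an `f`. Together with
`v`, any three out-neighbours of `v` that are pairwise joined by arcs in both directions form a
tile, so `c u = (f u - f v) / (-4 * f v)` is a fractional cover of these double triangles in the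
out-neighbourhood `N` of `v`; it suffices that every such cover has total weight at least `n / 4`.

For a threshold `0 < t < 1 / 3`, no double triangle has one vertex in `X = {c ≤ t}` and two in
`Y = {c < (1 - t) / 2}`. Each vertex misses at most `E` out-neighbours, so counting the missing
arcs bounds `X` and `Y` from above, hence `|N \ X| + |N \ Y| / 2` from below. Integrating over `t`
bounds the total weight of `c`, since a vertex of weight `c` contributes at most `min c (1 / 3)`
to the first term and `max (c - 1 / 3) 0` to the second.
-/

open Finset MeasureTheory

section Counting

variable {α β : Type*} (r : α → β → Prop) [∀ a, DecidablePred (r a)]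

lemma card_interedges_eq_sum (X : Finset α) (Y : Finset β) :
    #(Rel.interedges r X Y) = ∑ x ∈ X, #{y ∈ Y | r x y} := by
  simp only [Rel.interedges, card_filter, sum_product]

lemma card_interedges_sdiff_add_left [DecidableEq α] {X X' : Finset α} (hX : X ⊆ X')
    (Y : Finset β) :
    #(Rel.interedges r (X' \ X) Y) + #(Rel.interedges r X Y) = #(Rel.interedges r X' Y) := by
  simp only [card_interedges_eq_sum, sum_sdiff hX]

lemma card_interedges_sdiff_add_right [DecidableEq β] (X : Finset α) {Y Y' : Finset β}
    (hY : Y ⊆ Y') :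
    #(Rel.interedges r X (Y' \ Y)) + #(Rel.interedges r X Y) = #(Rel.interedges r X Y') := by
  simp only [card_interedges_eq_sum, ← sum_add_distrib, card_filter, sum_sdiff hY]

end Counting

section Bidirected

variable {V : Type*} {G : V → V → Prop}

/-- A triangle of double edges: `x`, `y`, `z` are pairwise joined by arcs in both directions. -/
def IsDoubleTriangle (G : V → V → Prop) (x y z : V) : Prop :=
  AntisymmRel G x y ∧ AntisymmRel G x z ∧ AntisymmRel G y z

/-- The pairs of `X × Y` that are not arcs of `G`. Applied to `AntisymmRel G`, these are the pairs
that are not double edges. -/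
abbrev nonArcs (G : V → V → Prop) [DecidableRel G] (X Y : Finset V) : Finset (V × V) :=
  Rel.interedges (fun u w => ¬ G u w) X Y

variable [DecidableRel G]

lemma card_nonArcs_antisymmRel_le (X Y : Finset V) :
    #(nonArcs (AntisymmRel G) X Y) ≤ #(nonArcs G X Y) + #(nonArcs G Y X) := by
  classical
  have hsub : nonArcs (AntisymmRel G) X Y ⊆
      nonArcs G X Y ∪ (nonArcs G Y X).map (Equiv.prodComm V V).toEmbedding := by
    rintro ⟨u, w⟩ h
    simp only [mem_union, mem_map_equiv, Rel.mem_interedges_iff, AntisymmRel, Equiv.prodComm_symm,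
      Equiv.prodComm_apply, Prod.swap] at h ⊢
    tauto
  simpa only [card_map] using (card_le_card hsub).trans (card_union_le _ _)

variable [Fintype V] {E : ℕ} (hE : ∀ v, #{w | ¬ G v w} ≤ E)
include hE

lemma card_nonArcs_le (X Y : Finset V) : #(nonArcs G X Y) ≤ E * #X := by
  rw [card_interedges_eq_sum, mul_comm]
  exact sum_le_card_nsmul _ _ _ fun x _ =>
    (card_le_card (filter_subset_filter _ (subset_univ Y))).trans (hE x)

lemma card_le_of_forall_not_antisymmRel {I : Finset V}
    (hI : ∀ u ∈ I, ∀ w ∈ I, ¬ AntisymmRel G u w) : #I ≤ 2 * E := by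
  have hall : nonArcs (AntisymmRel G) I I = I ×ˢ I :=
    filter_true_of_mem fun p hp => hI _ (mem_product.1 hp).1 _ (mem_product.1 hp).2
  have hcount := card_nonArcs_antisymmRel_le (G := G) I I
  rw [hall, card_product] at hcount
  have hle := card_nonArcs_le hE I I
  rcases I.card.eq_zero_or_pos with h | h
  · omega
  · exact Nat.le_of_mul_le_mul_right (by linarith) h

lemma card_le_card_not_antisymmRel_add {Y : Finset V} {x : V}
    (hx : ∀ y ∈ Y, ∀ z ∈ Y, ¬ IsDoubleTriangle G x y z) :
    #Y ≤ #{y ∈ Y | ¬ AntisymmRel G x y} + 2 * E := by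
  have hnbr : #{y ∈ Y | AntisymmRel G x y} ≤ 2 * E :=
    card_le_of_forall_not_antisymmRel hE fun y hy z hz hyz => by
      rw [mem_filter] at hy hz
      exact hx y hy.1 z hz.1 ⟨hy.2, hz.2, hyz⟩
  have := card_filter_add_card_filter_not (s := Y) (AntisymmRel G x)
  linarith

lemma card_mul_card_le_card_nonArcs_antisymmRel_add {X Y : Finset V}
    (hXY : ∀ x ∈ X, ∀ y ∈ Y, ∀ z ∈ Y, ¬ IsDoubleTriangle G x y z) :
    #X * #Y ≤ #(nonArcs (AntisymmRel G) X Y) + 2 * E * #X := by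
  rw [card_interedges_eq_sum, mul_comm (2 * E), ← smul_eq_mul, ← smul_eq_mul, ← sum_const,
    ← sum_const, ← sum_add_distrib]
  exact sum_le_sum fun x hx => card_le_card_not_antisymmRel_add hE (hXY x hx)

lemma card_le_of_forall_not_isDoubleTriangle {X : Finset V}
    (hX : ∀ x ∈ X, ∀ y ∈ X, ∀ z ∈ X, ¬ IsDoubleTriangle G x y z) : #X ≤ 4 * E := by
  have hlower := card_mul_card_le_card_nonArcs_antisymmRel_add hE hX
  have hupper := card_nonArcs_antisymmRel_le (G := G) X X
  have hle := card_nonArcs_le hE X X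
  rcases X.card.eq_zero_or_pos with h | h
  · omega
  · exact Nat.le_of_mul_le_mul_right (by linarith) h

-- Inside `X` the bound by missing arcs is averaged with the trivial bound `#X ^ 2`.
lemma two_mul_card_mul_card_le_of_forall_not_isDoubleTriangle {X Y : Finset V}
    (hXY : X ⊆ Y) (hT : ∀ x ∈ X, ∀ y ∈ Y, ∀ z ∈ Y, ¬ IsDoubleTriangle G x y z) :
    2 * #X * #Y ≤ 4 * E * #X + 2 * E * #Y + #X ^ 2 := by
  classical
  have hlower := card_mul_card_le_card_nonArcs_antisymmRel_add hE hT
  have hsplit := card_interedges_sdiff_add_right (fun u w => ¬ AntisymmRel G u w) X hXY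
  have hcross := card_nonArcs_antisymmRel_le (G := G) X (Y \ X)
  have hinside := card_nonArcs_antisymmRel_le (G := G) X X
  have htrivial := Rel.card_interedges_le_mul (fun u w => ¬ AntisymmRel G u w) X X
  have htotal : #(nonArcs G X (Y \ X)) + #(nonArcs G (Y \ X) X) + #(nonArcs G X X) ≤ E * #Y := by
    have hright := card_interedges_sdiff_add_right (fun u w => ¬ G u w) X hXY
    have hleft := card_interedges_sdiff_add_left (fun u w => ¬ G u w) hXY Y
    have hmono := card_le_card
      (Rel.interedges_mono (r := fun u w => ¬ G u w) (Subset.refl (Y \ X)) hXY)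
    have hle := card_nonArcs_le hE Y Y
    linarith
  linarith

end Bidirected

-- The expression `3 / 2 * (m - E) * (a - E) - 5 / 2 * a ^ 2` is concave in `a`, hence nonnegative
-- between `(m - 3 * E) / 4` and `4 * E`, where it is nonnegative: at `a = 4 * E` its value is
-- `E * (9 * m - 89 * E) / 2`. The constant `89 / 98` in the degree condition comes from here, with
-- `m + E` vertices.
lemma le_sub_add_half_sub {m a b E : ℝ} (hE : 89 * E ≤ 9 * m) (hbm : b ≤ m)
    (ha : a ≤ 4 * E) (hab : 2 * a * b ≤ 4 * E * a + 2 * E * b + a ^ 2) :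
    3 / 4 * (m + E) ≤ (m - a) + (m - b) / 2 := by
  by_contra! hlt
  have ha_lower : (m - 3 * E) / 4 < a := by linarith
  have hb_lower : 3 / 2 * (m - E) - 2 * a < b := by linarith
  have hneg : 3 / 2 * (m - E) * (a - E) - 5 / 2 * a ^ 2 < 0 := by
    linarith [mul_lt_mul_of_pos_right hb_lower (by linarith : 0 < a - E)]
  have hbetween : 0 ≤ (4 * E - a) * (a - (m - 3 * E) / 4) :=
    mul_nonneg (sub_nonneg.2 ha) (sub_nonneg.2 ha_lower.le)
  nlinarith [mul_nonneg (sub_nonneg.2 ha_lower.le) (sub_nonneg.2 hE)]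

lemma setIntegral_threshold_le {c : ℝ} (hc : 0 ≤ c) :
    ∫ t in Set.Ioo (0 : ℝ) (1 / 3), ((Set.Iio c).indicator (fun _ => (1 : ℝ)) t
      + (Set.Ici (1 - 2 * c)).indicator (fun _ => (1 / 2 : ℝ)) t) ≤ c := by
  have hlow : volume.real (Set.Iio c ∩ Set.Ioo (0 : ℝ) (1 / 3)) ≤ min c (1 / 3) := by
    rw [Set.inter_comm, Set.Ioo_inter_Iio, Real.volume_real_Ioo_of_le (by positivity)]
    grind
  have hhigh : volume.real (Set.Ici (1 - 2 * c) ∩ Set.Ioo (0 : ℝ) (1 / 3))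
      ≤ max (1 / 3 - (1 - 2 * c)) 0 := by
    rw [← Real.volume_real_Icc]
    exact measureReal_mono (fun t ht => ⟨ht.1, ht.2.2.le⟩) isCompact_Icc.measure_ne_top
  rw [integral_add ((integrable_const _).indicator measurableSet_Iio)
      ((integrable_const _).indicator measurableSet_Ici),
    integral_indicator measurableSet_Iio, integral_indicator measurableSet_Ici,
    Measure.restrict_restrict measurableSet_Iio, Measure.restrict_restrict measurableSet_Ici]
  simp only [integral_const, smul_eq_mul, measureReal_restrict_apply_univ, mul_one]
  have hsplit : min c (1 / 3) + max (1 / 3 - (1 - 2 * c)) 0 * (1 / 2) = c := by grind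
  linarith

lemma div_three_le_sum_of_forall_threshold {α : Type*} {N : Finset α} {c : α → ℝ} {M : ℝ}
    (hc : ∀ x ∈ N, 0 ≤ c x)
    (h : ∀ t ∈ Set.Ioo (0 : ℝ) (1 / 3),
      M ≤ #{x ∈ N | t < c x} + (#{x ∈ N | (1 - t) / 2 ≤ c x} : ℝ) / 2) :
    M / 3 ≤ ∑ x ∈ N, c x := by
  let w (x : α) (t : ℝ) : ℝ := (Set.Iio (c x)).indicator (fun _ => 1) t
    + (Set.Ici (1 - 2 * c x)).indicator (fun _ => 1 / 2) t
  have hw (x) : IntegrableOn (w x) (Set.Ioo 0 (1 / 3)) :=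
    ((integrable_const _).indicator measurableSet_Iio).add
      ((integrable_const _).indicator measurableSet_Ici)
  have hM (t) (ht : t ∈ Set.Ioo (0 : ℝ) (1 / 3)) : M ≤ ∑ x ∈ N, w x t := by
    refine (h t ht).trans_eq ?_
    have hiff (x) : (1 - t) / 2 ≤ c x ↔ 1 - 2 * c x ≤ t := by constructor <;> intro <;> linarith
    simp only [w, sum_add_distrib, card_filter, Nat.cast_sum, sum_div, Set.indicator_apply,
      Set.mem_Iio, Set.mem_Ici, hiff, Nat.cast_ite, Nat.cast_one, Nat.cast_zero, ite_div, zero_div]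
  calc M / 3 = ∫ _ in Set.Ioo (0 : ℝ) (1 / 3), M := by simp [div_eq_inv_mul]
    _ ≤ ∫ t in Set.Ioo (0 : ℝ) (1 / 3), ∑ x ∈ N, w x t :=
      setIntegral_mono_on (integrable_const M) (integrable_finsetSum N fun x _ => hw x)
        measurableSet_Ioo hM
    _ = ∑ x ∈ N, ∫ t in Set.Ioo (0 : ℝ) (1 / 3), w x t := integral_finsetSum N fun x _ => hw x
    _ ≤ ∑ x ∈ N, c x := sum_le_sum fun x hx => setIntegral_threshold_le (hc x hx)

lemma card_add_div_four_le_sum_of_isDoubleTriangle {V : Type*} {G : V → V → Prop} [DecidableRel G]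
    [Fintype V] {E : ℕ} (hE : ∀ v, #{w | ¬ G v w} ≤ E) {N : Finset V} (hN : 89 * E ≤ 9 * #N)
    {c : V → ℝ} (hc : ∀ x ∈ N, 0 ≤ c x)
    (hT : ∀ x ∈ N, ∀ y ∈ N, ∀ z ∈ N, IsDoubleTriangle G x y z → 1 ≤ c x + c y + c z) :
    (#N + E : ℝ) / 4 ≤ ∑ x ∈ N, c x := by
  suffices 3 / 4 * (#N + E : ℝ) / 3 ≤ ∑ x ∈ N, c x by linarith
  refine div_three_le_sum_of_forall_threshold hc fun t ht => ?_
  let X : Finset V := {x ∈ N | c x ≤ t}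
  let Y : Finset V := {x ∈ N | c x < (1 - t) / 2}
  have hXY : X ⊆ Y := monotone_filter_right N fun x _ hx => by linarith [ht.2]
  have hfree : ∀ x ∈ X, ∀ y ∈ Y, ∀ z ∈ Y, ¬ IsDoubleTriangle G x y z := by
    intro x hx y hy z hz hxyz
    simp only [X, Y, mem_filter] at hx hy hz
    linarith [hT x hx.1 y hy.1 z hz.1 hxyz]
  have hX : #X ≤ 4 * E := card_le_of_forall_not_isDoubleTriangle hE fun x hx y hy z hz =>
    hfree x hx y (hXY hy) z (hXY hz)
  have hXY_card := two_mul_card_mul_card_le_of_forall_not_isDoubleTriangle hE hXY hfree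
  have hX_compl : (#X + #{x ∈ N | t < c x} : ℝ) = #N := by
    simp only [X, ← not_le]; exact_mod_cast card_filter_add_card_filter_not _
  have hY_compl : (#Y + #{x ∈ N | (1 - t) / 2 ≤ c x} : ℝ) = #N := by
    simp only [Y, ← not_lt]; exact_mod_cast card_filter_add_card_filter_not _
  have hbound := le_sub_add_half_sub (m := #N) (a := #X) (b := #Y) (E := E)
    (by exact_mod_cast hN) (by exact_mod_cast card_filter_le N _)
    (by exact_mod_cast hX) (by exact_mod_cast hXY_card)
  linarith

lemma sum_nonneg_of_isDoubleTriangle {V : Type*} [Fintype V] {G : V → V → Prop} [DecidableRel G]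
    {E : ℕ} (hE : ∀ v, #{w | ¬ G v w} ≤ E) (hEV : 98 * E ≤ 9 * Fintype.card V) {f : V → ℝ}
    (hf : ∀ v x y z, G v x → G v y → G v z → IsDoubleTriangle G x y z →
      0 ≤ f v + f x + f y + f z) :
    0 ≤ ∑ v, f v := by
  by_contra! hneg
  obtain ⟨u, -, hu⟩ := exists_lt_of_sum_lt (hneg.trans_eq sum_const_zero.symm)
  obtain ⟨v, -, hv⟩ := exists_min_image univ f ⟨u, mem_univ u⟩
  have hfv : 0 < -f v := neg_pos.2 ((hv u (mem_univ u)).trans_lt hu)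
  let N : Finset V := {w | G v w}
  have hN : Fintype.card V ≤ #N + E := by
    have hsplit := card_filter_add_card_filter_not (s := univ) (G v)
    rw [card_univ] at hsplit
    linarith [hE v]
  let c (x : V) : ℝ := (f x - f v) / (4 * -f v)
  have hc (x) : 0 ≤ c x := div_nonneg (sub_nonneg.2 (hv x (mem_univ x))) (by positivity)
  have hcover : (#N + E : ℝ) / 4 ≤ ∑ x ∈ N, c x := by
    refine card_add_div_four_le_sum_of_isDoubleTriangle hE (by omega) (fun x _ => hc x) ?_
    intro x hx y hy z hz hxyz
    have := hf v x y z (by simpa [N] using hx) (by simpa [N] using hy) (by simpa [N] using hz) hxyz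
    rw [← add_div, ← add_div, one_le_div (by positivity)]
    linarith
  have htotal : (Fintype.card V : ℝ) / 4 ≤ (∑ x, f x - Fintype.card V * f v) / (4 * -f v) :=
    calc (Fintype.card V : ℝ) / 4 ≤ (#N + E : ℝ) / 4 := by gcongr; exact_mod_cast hN
      _ ≤ ∑ x, c x := hcover.trans (sum_le_univ_sum_of_nonneg hc)
      _ = (∑ x, f x - Fintype.card V * f v) / (4 * -f v) := by
        rw [← sum_div, sum_sub_distrib, sum_const, card_univ, nsmul_eq_mul]
  rw [le_div_iff₀ (by positivity)] at htotal
  linarith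

section Tilings

/-- A perfect fractional tiling of `V` by the sets satisfying `P`: a weighting of tiles under which
every vertex has total weight `1`. The weights form a function on all finite sets, vanishing outside
`P`. -/
def IsPerfectFractionalTiling {V : Type*} [Fintype V] [DecidableEq V]
    (P : Finset V → Prop) (ω : Finset V → ℝ) : Prop :=
  (∀ S, 0 ≤ ω S ∧ ω S ≤ 1) ∧ (∀ S, ω S ≠ 0 → P S) ∧ ∀ v, ∑ S with v ∈ S, ω S = 1

lemma exists_mem_stdSimplex_sum_smul_eq {ι F : Type*} [Fintype ι] [AddCommGroup F] [Module ℝ F]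
    [TopologicalSpace F] [IsTopologicalAddGroup F] [ContinuousSMul ℝ F] [LocallyConvexSpace ℝ F]
    [T2Space F] (a : ι → F) (b : F)
    (h : ∀ (f : StrongDual ℝ F) (s : ℝ), (∀ i, s ≤ f (a i)) → s ≤ f b) :
    ∃ w ∈ stdSimplex ℝ ι, ∑ i, w i • a i = b := by
  classical
  by_contra! hb
  let L : (ι → ℝ) →ₗ[ℝ] F := Fintype.linearCombination ℝ a
  have hcompact : IsCompact (L '' stdSimplex ℝ ι) :=
    (isCompact_stdSimplex ℝ ι).image L.continuous_of_finiteDimensional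
  obtain ⟨f, s, hfb, hfa⟩ := geometric_hahn_banach_point_closed
    ((convex_stdSimplex ℝ ι).linear_image L) hcompact.isClosed
    (fun ⟨w, hw, hwb⟩ => hb w hw hwb : b ∉ L '' stdSimplex ℝ ι)
  refine hfb.not_ge (h f s fun i => (hfa (a i) ⟨Pi.single i 1, single_mem_stdSimplex ℝ i, ?_⟩).le)
  simp [L]

variable {V : Type*} [Fintype V] [DecidableEq V] {P : Finset V → Prop}

lemma isPerfectFractionalTiling_of_nonneg {ω : Finset V → ℝ} (hP : ∀ S, P S → S.Nonempty)
    (hω : ∀ S, 0 ≤ ω S) (hωP : ∀ S, ω S ≠ 0 → P S) (hsum : ∀ v, ∑ S with v ∈ S, ω S = 1) :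
    IsPerfectFractionalTiling P ω := by
  refine ⟨fun S => ⟨hω S, ?_⟩, hωP, hsum⟩
  by_cases h : ω S = 0
  · exact h.trans_le zero_le_one
  · obtain ⟨v, hv⟩ := hP S (hωP S h)
    exact (single_le_sum (fun T _ => hω T) (by simpa using hv)).trans_eq (hsum v)

theorem exists_isPerfectFractionalTiling (hP : ∀ S, P S → S.Nonempty)
    (hdual : ∀ f : V → ℝ, (∀ S, P S → 0 ≤ ∑ v ∈ S, f v) → 0 ≤ ∑ v, f v) :
    ∃ ω, IsPerfectFractionalTiling P ω := by
  classical
  cases isEmpty_or_nonempty V with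
  | inl _ => exact ⟨0, by simp [IsPerfectFractionalTiling]⟩
  | inr _ =>
  let a (S : {S // P S}) (v : V) : ℝ := if v ∈ S.1 then (#S.1 : ℝ)⁻¹ else 0
  obtain ⟨w, ⟨hw, -⟩, hwa⟩ := exists_mem_stdSimplex_sum_smul_eq a
    (fun _ => (Fintype.card V : ℝ)⁻¹) fun f s hs => by
      let y (v : V) : ℝ := f (Pi.single v 1)
      have hf (x : V → ℝ) : f x = ∑ v, x v * y v := by
        conv_lhs => rw [pi_eq_sum_univ' x]
        simp [y]
      have hy := hdual (fun v => y v - s) fun S hS => by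
        have := hs ⟨S, hS⟩
        have hpos : (0 : ℝ) < #S := by exact_mod_cast (hP S hS).card_pos
        simp only [hf, a, ite_mul, zero_mul, sum_ite_mem, univ_inter, ← mul_sum] at this
        rw [le_inv_mul_iff₀ hpos] at this
        simpa [sum_sub_distrib] using this
      rw [hf, ← mul_sum, le_inv_mul_iff₀ (by positivity)]
      simpa [sum_sub_distrib] using hy
  let ω (S : Finset V) : ℝ := if h : P S then Fintype.card V * (w ⟨S, h⟩ * (#S : ℝ)⁻¹) else 0
  refine ⟨ω, isPerfectFractionalTiling_of_nonneg hP (fun S => ?_) (fun S hS => ?_) fun v => ?_⟩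
  · by_cases h : P S
    · simp only [ω, dif_pos h]
      have := hw ⟨S, h⟩
      positivity
    · simp [ω, h]
  · exact not_not.1 fun h => hS (dif_neg h)
  · have hv : ∑ S : {S // P S}, w S * a S v = (Fintype.card V : ℝ)⁻¹ := by
      simpa only [Finset.sum_apply, Pi.smul_apply, smul_eq_mul] using congrFun hwa v
    calc ∑ S with v ∈ S, ω S = ∑ S with P S, if v ∈ S then ω S else 0 := by
          rw [sum_filter, sum_filter]
          exact sum_congr rfl fun S _ => by by_cases h : P S <;> simp [ω, h]
      _ = ∑ S : {S // P S}, if v ∈ S.1 then ω S else 0 := sum_subtype _ (by simp) _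
      _ = ∑ S : {S // P S}, Fintype.card V * (w S * a S v) :=
        sum_congr rfl fun S _ => by simp [ω, a, S.2]
      _ = 1 := by rw [← mul_sum, hv, mul_inv_cancel₀ (by positivity)]

end Tilings

lemma two_le_ncard_of_mem {V : Type*} {G : V → V → Prop} {S : Finset V} {u x y : V}
    (hx : x ∈ S) (hy : y ∈ S) (hxy : x ≠ y) (hux : G u x) (huy : G u y) :
    2 ≤ Set.ncard {w | w ∈ S ∧ G u w} := by
  rw [← Set.ncard_pair hxy]
  exact Set.ncard_le_ncard (Set.pair_subset ⟨hx, hux⟩ ⟨hy, huy⟩)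

lemma nodup_of_isDoubleTriangle {V : Type*} {G : V → V → Prop} (hirr : ∀ v, ¬ G v v)
    {v x y z : V} (hx : G v x) (hy : G v y) (hz : G v z) (h : IsDoubleTriangle G x y z) :
    [v, x, y, z].Nodup := by
  have hne {a b : V} (hab : G a b) : a ≠ b := fun e => hirr b (e ▸ hab)
  simp [hne hx, hne hy, hne hz, hne h.1.1, hne h.2.1.1, hne h.2.2.1]

lemma isKrs_of_isDoubleTriangle {n : ℕ} {G : Fin n → Fin n → Prop} (hirr : ∀ v, ¬ G v v)
    {v x y z : Fin n} (hx : G v x) (hy : G v y) (hz : G v z) (h : IsDoubleTriangle G x y z) :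
    IsKrs G 4 2 {v, x, y, z} := by
  have hnodup := nodup_of_isDoubleTriangle hirr hx hy hz h
  obtain ⟨⟨hxy, hyx⟩, ⟨hxz, hzx⟩, hyz, hzy⟩ := h
  refine ⟨by simpa using List.toFinset_card_of_nodup hnodup, ?_, ?_⟩
  · simp only [mem_insert, mem_singleton]
    rintro a (rfl | rfl | rfl | rfl) b (rfl | rfl | rfl | rfl) hab <;> tauto
  · have hne {a b : Fin n} (hab : G a b) : a ≠ b := fun e => hirr b (e ▸ hab)
    simp only [forall_mem_insert, mem_singleton, forall_eq]
    refine ⟨?_, ?_, ?_, ?_⟩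
    · exact two_le_ncard_of_mem (by simp) (by simp) (hne hxy) hx hy
    · exact two_le_ncard_of_mem (by simp) (by simp) (hne hyz) hxy hxz
    · exact two_le_ncard_of_mem (by simp) (by simp) (hne hxz) hyx hyz
    · exact two_le_ncard_of_mem (by simp) (by simp) (hne hxy) hzx hzy

theorem stmt_7_general {n : ℕ} (G : Fin n → Fin n → Prop) (hirr : ∀ v, ¬ G v v)
    (hdeg : ∀ v, (89 / 98 : ℝ) * n ≤ Set.ncard {w | G v w}) :
    ∃ ω, IsPerfectFractionalTiling (IsKrs G 4 2) ω := by
  classical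
  have hE (v) : #{w | ¬ G v w} ≤ 9 * n / 98 := by
    have hcompl := Set.ncard_add_ncard_compl {w | G v w}
    rw [Nat.card_eq_fintype_card, Fintype.card_fin, Set.compl_ofPred] at hcompl
    have hout : 89 * n ≤ 98 * Set.ncard {w | G v w} := by
      rify; linarith [hdeg v]
    rw [← Set.ncard_coe_finset, coe_filter_univ]
    omega
  refine exists_isPerfectFractionalTiling (fun S hS => card_pos.1 (by simp [hS.1])) fun f hf => ?_
  refine sum_nonneg_of_isDoubleTriangle hE (by rw [Fintype.card_fin]; omega) ?_
  intro v x y z hx hy hz h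
  have hsum : ∑ u ∈ {v, x, y, z}, f u = f v + f x + f y + f z := by
    simpa [add_assoc] using List.sum_toFinset f (nodup_of_isDoubleTriangle hirr hx hy hz h)
  exact hsum ▸ hf _ (isKrs_of_isDoubleTriangle hirr hx hy hz h)

/-- Every sufficiently large digraph with minimum out-degree at least
`(2 + √(13/2) + γ)n/5` has a perfect fractional `(4,2)`-tiling. -/
theorem stmt_7 (γ : ℝ) (hγ : 0 < γ) :
    ∃ n₀ : ℕ, ∀ n, n₀ ≤ n → ∀ G : Fin n → Fin n → Prop, (∀ v, ¬ G v v) →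
      (∀ v : Fin n, (2 + Real.sqrt (13 / 2) + γ) * n / 5 ≤ (Set.ncard {w | G v w} : ℝ)) →
      ∃ ω : Finset (Fin n) → ℝ,
        (∀ S, 0 ≤ ω S ∧ ω S ≤ 1) ∧
        (∀ S, ω S ≠ 0 → IsKrs G 4 2 S) ∧
        (∀ v : Fin n, ∑ S ∈ Finset.univ.filter (fun S => v ∈ S), ω S = 1) := by
  refine ⟨0, fun n _ G hirr hdeg => stmt_7_general G hirr fun v => le_trans ?_ (hdeg v)⟩
  have hsqrt : 2.545 ≤ Real.sqrt (13 / 2) := Real.le_sqrt_of_sq_le (by norm_num)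
  calc (89 / 98 : ℝ) * n ≤ (2 + Real.sqrt (13 / 2) + γ) / 5 * n :=
      mul_le_mul_of_nonneg_right (by linarith) n.cast_nonneg
    _ = (2 + Real.sqrt (13 / 2) + γ) * n / 5 := by ring
end

section
/- Let G be a graph on n vertices whose number of edges exceeds both C(2t−1, 2) and C(n,2) − C(n−t+1, 2). Then G contains a matching of size t. -/
/-!
A set family is *shifted* if, for all `i < j`, replacing `j` by `i` in a member that contains `j`
but not `i` gives another member. The compression `𝓒 {i} {j}` keeps the number of edges of a graph
and creates no larger matching, and if it changes the graph it lowers the sum of all endpoints, so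
the edges may be assumed to form a shifted family. If a shifted graph on `{0, …, n - 1}` has no
matching of size `t`, then one of the `t` nested disjoint pairs `{k, 2t - 1 - k}` is not an edge, so
every edge either lies inside `{0, …, 2t - 2 - k}` or has an end in `{0, …, k - 1}`. This bounds the
number of edges by a convex quadratic in `k ∈ {0, …, t - 1}`, whose two end values are the two terms
of the maximum.
-/

namespace ErdosGallai

open Finset UV
open scoped FinsetFamily

section Matching

variable {α β ι : Type*} {𝒜 : Finset (Finset α)} {t : ℕ}

/-- A set family has a matching of size `t` if it has `t` distinct, pairwise disjoint members. -/
def HasMatching (𝒜 : Finset (Finset α)) (t : ℕ) : Prop :=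
  ∃ ℳ ⊆ 𝒜, #ℳ = t ∧ (ℳ : Set (Finset α)).PairwiseDisjoint id

lemma hasMatching_of_injOn {s : Finset ι} {g : ι → Finset α} (hmem : ∀ x ∈ s, g x ∈ 𝒜)
    (hinj : Set.InjOn g s) (hdisj : (s : Set ι).PairwiseDisjoint g) : HasMatching 𝒜 #s := by
  classical
  refine ⟨s.image g, image_subset_iff.2 hmem, card_image_of_injOn hinj, ?_⟩
  rwa [coe_image, hinj.pairwiseDisjoint_image]

lemma hasMatching_of_map_mem {ℳ : Finset (Finset α)} {ℬ : Finset (Finset β)} (f : α ↪ β)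
    (hdisj : (ℳ : Set (Finset α)).PairwiseDisjoint id) (hmem : ∀ e ∈ ℳ, e.map f ∈ ℬ) :
    HasMatching ℬ #ℳ :=
  hasMatching_of_injOn hmem (map_injective f).injOn fun _ he _ he' hne ↦
    (disjoint_map f).2 (hdisj he he' hne)

end Matching

section Compression

variable {α : Type*} [DecidableEq α] {𝒜 : Finset (Finset α)} {e : Finset α} {i j : α} {t : ℕ}

lemma map_swap_eq_self (hi : i ∉ e) (hj : j ∉ e) : e.map (Equiv.swap i j).toEmbedding = e := by
  ext x
  rw [mem_map_equiv, Equiv.symm_swap, Equiv.swap_apply_def]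
  grind

lemma map_swap_eq_union_sdiff (hi : i ∉ e) (hj : j ∈ e) :
    e.map (Equiv.swap i j).toEmbedding = (e ∪ {i}) \ {j} := by
  ext x
  rw [mem_map_equiv, Equiv.symm_swap, Equiv.swap_apply_def]
  grind

lemma map_swap_mem_of_mem_compression (he : e ∈ 𝓒 {i} {j} 𝒜) (he𝒜 : e ∈ 𝒜) (hi : i ∉ e) :
    e.map (Equiv.swap i j).toEmbedding ∈ 𝒜 := by
  by_cases hj : j ∈ e
  · rw [map_swap_eq_union_sdiff hi hj]
    exact sup_sdiff_mem_of_mem_compression he (singleton_subset_iff.2 hj)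
      (disjoint_singleton_left.2 hi)
  · rwa [map_swap_eq_self hi hj]

lemma mem_of_mem_compression_of_notMem (he : e ∈ 𝓒 {i} {j} 𝒜) (he𝒜 : e ∉ 𝒜) : i ∈ e :=
  singleton_subset_iff.1 (le_of_mem_compression_of_notMem he he𝒜)

lemma map_swap_mem_of_mem_compression_of_notMem (he : e ∈ 𝓒 {i} {j} 𝒜) (he𝒜 : e ∉ 𝒜) :
    e.map (Equiv.swap i j).toEmbedding ∈ 𝒜 := by
  have hj : j ∉ e := disjoint_singleton_left.1 (disjoint_of_mem_compression_of_notMem he he𝒜)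
  rw [Equiv.swap_comm,
    map_swap_eq_union_sdiff hj (mem_of_mem_compression_of_notMem he he𝒜)]
  exact sup_sdiff_mem_of_mem_compression_of_notMem he he𝒜

/-- If a matching of the compressed family uses a set outside `𝒜`, that set contains `i`, so no
other set of the matching does; exchanging `i` and `j` then moves the whole matching into `𝒜`. -/
lemma HasMatching.of_compression (h : HasMatching (𝓒 {i} {j} 𝒜) t) : HasMatching 𝒜 t := by
  obtain ⟨ℳ, hℳ, rfl, hdisj⟩ := h
  by_cases hsub : ℳ ⊆ 𝒜
  · exact ⟨ℳ, hsub, rfl, hdisj⟩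
  obtain ⟨e₀, he₀, he₀𝒜⟩ := not_subset.1 hsub
  have hi₀ : i ∈ e₀ := mem_of_mem_compression_of_notMem (hℳ he₀) he₀𝒜
  refine hasMatching_of_map_mem (Equiv.swap i j).toEmbedding hdisj fun e he ↦ ?_
  by_cases he𝒜 : e ∈ 𝒜
  · have hne : e ≠ e₀ := ne_of_mem_of_not_mem he𝒜 he₀𝒜
    have hi : i ∉ e := fun hi ↦ disjoint_left.1 (hdisj he he₀ hne) hi hi₀
    exact map_swap_mem_of_mem_compression (hℳ he) he𝒜 hi
  · exact map_swap_mem_of_mem_compression_of_notMem (hℳ he) he𝒜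

variable {M : Type*} [AddCommMonoid M] [PartialOrder M] [IsOrderedCancelAddMonoid M]

lemma sum_compression_lt {w : Finset α → M} {u v : Finset α}
    (hw : ∀ e, compress u v e ≠ e → w (compress u v e) < w e) (h : ¬ IsCompressed u v 𝒜) :
    ∑ e ∈ 𝓒 u v 𝒜, w e < ∑ e ∈ 𝒜, w e := by
  have hlt : ∀ e ∈ {e ∈ 𝒜 | compress u v e ∉ 𝒜}, w (compress u v e) < w e := fun e he ↦
    have ⟨he𝒜, hne𝒜⟩ := mem_filter.1 he
    hw e (ne_of_mem_of_not_mem he𝒜 hne𝒜).symm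
  have hne : {e ∈ 𝒜 | compress u v e ∉ 𝒜}.Nonempty := by
    contrapose! h
    rw [IsCompressed, compression, filter_image, h, image_empty, union_empty, filter_eq_self]
    simpa [filter_eq_empty_iff] using h
  rw [compression, sum_union compress_disjoint, filter_image, sum_image compress_injOn,
    ← sum_filter_add_sum_filter_not 𝒜 (compress u v · ∈ 𝒜)]
  exact add_lt_add_right (sum_lt_sum_of_nonempty hne hlt) _

lemma sum_compress_singleton_lt {w : α → M} (hw : w i < w j) (he : compress {i} {j} e ≠ e) :
    ∑ x ∈ compress {i} {j} e, w x < ∑ x ∈ e, w x := by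
  unfold compress at he ⊢
  split_ifs at he ⊢ with h
  · have hi : i ∉ e := disjoint_singleton_left.1 h.1
    have hj : j ∈ e := singleton_subset_iff.1 h.2
    have hcompress : (e ⊔ {i}) \ {j} = insert i (e.erase j) := by grind
    rw [hcompress, sum_insert (by grind), ← add_sum_erase e w hj]
    exact add_lt_add_left hw _
  · exact absurd rfl he

end Compression

section Shifted

/-- A set family on an ordered type is shifted if replacing an element of a member by a smaller one
outside that member always gives another member. -/
def IsShifted {α : Type*} [LT α] [DecidableEq α] (𝒜 : Finset (Finset α)) : Prop :=
  ∀ ⦃i j : α⦄, i < j → IsCompressed {i} {j} 𝒜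

lemma exists_isShifted {α : Type*} [Preorder α] [LocallyFiniteOrderBot α] [DecidableEq α]
    {P : Finset (Finset α) → Prop} (hP : ∀ ℬ i j, P ℬ → P (𝓒 {i} {j} ℬ))
    {𝒜 : Finset (Finset α)} (h𝒜 : P 𝒜) : ∃ ℬ, P ℬ ∧ IsShifted ℬ := by
  let weight (ℬ : Finset (Finset α)) : ℕ := ∑ e ∈ ℬ, ∑ x ∈ e, #(Iio x)
  obtain ⟨ℬ, hℬ, hmin⟩ := exists_minimalFor_of_wellFoundedLT P weight ⟨𝒜, h𝒜⟩
  refine ⟨ℬ, hℬ, fun i j hij ↦ ?_⟩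
  by_contra hcompressed
  have hrank : #(Iio i) < #(Iio j) := card_lt_card (Iio_ssubset_Iio hij)
  have hlt : weight (𝓒 {i} {j} ℬ) < weight ℬ :=
    sum_compression_lt (fun _ ↦ sum_compress_singleton_lt (w := fun x ↦ #(Iio x)) hrank) hcompressed
  exact hlt.not_ge (hmin (hP ℬ i j hℬ) hlt.le)

variable {α : Type*} [LinearOrder α] {𝒜 : Finset (Finset α)} {a b c d : α}

lemma IsShifted.pair_mem_of_le_left (h : IsShifted 𝒜) (hca : c ≤ a) (hbc : b ≠ c) (hba : b ≠ a)
    (hab : {a, b} ∈ 𝒜) : {c, b} ∈ 𝒜 := by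
  obtain rfl | hca := hca.eq_or_lt
  · exact hab
  have hmem := sup_sdiff_mem_of_mem_compression ((h hca).eq.symm ▸ hab) (by simp)
    (disjoint_singleton_left.2 (by grind))
  have hpair : ({a, b} ⊔ {c}) \ {a} = ({c, b} : Finset α) := by grind
  rwa [hpair] at hmem

lemma IsShifted.pair_mem (h : IsShifted 𝒜) (hca : c ≤ a) (hdb : d ≤ b) (hab : a < b) (hcd : c ≠ d)
    (hmem : {a, b} ∈ 𝒜) : {c, d} ∈ 𝒜 := by
  have hcb : c < b := hca.trans_lt hab
  have hbc : {b, c} ∈ 𝒜 := pair_comm c b ▸ h.pair_mem_of_le_left hca hcb.ne' hab.ne' hmem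
  exact pair_comm d c ▸ h.pair_mem_of_le_left hdb hcd hcb.ne hbc

lemma IsShifted.subset_of_pair_notMem [LocallyFiniteOrderBot α] [LocallyFiniteOrderTop α]
    (h : IsShifted 𝒜) (hsized : (𝒜 : Set (Finset α)).Sized 2) (hcd : c < d) (hmem : {c, d} ∉ 𝒜) :
    𝒜 ⊆ (Iio d).powersetCard 2 ∪ (Iio c ×ˢ Ici d).image fun p ↦ {p.1, p.2} := by
  have mem_of_lt {a b : α} (hab : a < b) (he : {a, b} ∈ 𝒜) :
      {a, b} ∈ (Iio d).powersetCard 2 ∪ (Iio c ×ˢ Ici d).image fun p ↦ {p.1, p.2} := by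
    obtain hbd | hdb := lt_or_ge b d
    · refine mem_union_left _ (mem_powersetCard.2 ⟨?_, hsized he⟩)
      simpa [insert_subset_iff] using ⟨hab.trans hbd, hbd⟩
    · have hac : a < c := by
        by_contra! hca
        exact hmem (h.pair_mem hca hdb hab hcd.ne he)
      exact mem_union_right _ (mem_image.2 ⟨(a, b), by simp [hac, hdb], rfl⟩)
  intro e he
  obtain ⟨a, b, hab, rfl⟩ := card_eq_two.1 (hsized he)
  obtain hab | hba := hab.lt_or_gt
  · exact mem_of_lt hab he
  · rw [pair_comm] at he ⊢
    exact mem_of_lt hba he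

lemma IsShifted.card_le_of_pair_notMem [LocallyFiniteOrderBot α] [LocallyFiniteOrderTop α]
    (h : IsShifted 𝒜) (hsized : (𝒜 : Set (Finset α)).Sized 2) (hcd : c < d) (hmem : {c, d} ∉ 𝒜) :
    #𝒜 ≤ (#(Iio d)).choose 2 + #(Iio c) * #(Ici d) :=
  calc
    #𝒜 ≤ #((Iio d).powersetCard 2) + #((Iio c ×ˢ Ici d).image fun p ↦ ({p.1, p.2} : Finset α)) :=
      (card_le_card (h.subset_of_pair_notMem hsized hcd hmem)).trans (card_union_le _ _)
    _ ≤ (#(Iio d)).choose 2 + #(Iio c) * #(Ici d) := by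
      rw [card_powersetCard, ← card_product]
      exact Nat.add_le_add_left card_image_le _

end Shifted

section Extremal

variable {n t : ℕ}

lemma exists_nested_pair_notMem (hn : 2 * t ≤ n) {𝒜 : Finset (Finset (Fin n))}
    (h𝒜 : ¬ HasMatching 𝒜 t) :
    ∃ c d : Fin n, (c : ℕ) < t ∧ (d : ℕ) = 2 * t - 1 - c ∧ {c, d} ∉ 𝒜 := by
  by_contra! hmem
  let g (k : Fin t) : Finset (Fin n) := {⟨k, by lia⟩, ⟨2 * t - 1 - k, by lia⟩}
  have hdisj : Pairwise (Function.onFun Disjoint g) := by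
    intro k l hkl
    have hkl : (k : ℕ) ≠ l := Fin.val_ne_of_ne hkl
    simp only [Function.onFun, g, disjoint_insert_left, disjoint_singleton_left, mem_insert,
      mem_singleton, Fin.mk.injEq]
    lia
  have hinj : Function.Injective g :=
    Function.injective_iff_pairwise_ne.2 (hdisj.mono fun k _ hkl ↦ hkl.ne (insert_ne_empty _ _))
  have hmatching : HasMatching 𝒜 #(univ : Finset (Fin t)) :=
    hasMatching_of_injOn (fun k _ ↦ hmem _ _ k.2 rfl) hinj.injOn (hdisj.set_pairwise _)
  exact h𝒜 (by rwa [card_fin] at hmatching)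

/-- Twice the left-hand side is `3k² + (2n - 8t + 5)k` plus a constant: it is convex in `k`, with
values `2 * (2t - 1).choose 2` at `k = 0` and `2 * (n.choose 2 - (n - t + 1).choose 2)` at
`k = t - 1`. -/
lemma choose_two_add_mul_le_max {k : ℕ} (hk : k < t) (hn : 2 * t ≤ n) :
    (2 * t - 1 - k).choose 2 + k * (n - (2 * t - 1 - k)) ≤
      max ((2 * t - 1).choose 2) (n.choose 2 - (n - t + 1).choose 2) := by
  obtain ⟨d, rfl⟩ := Nat.exists_eq_add_of_le hn
  obtain ⟨r, rfl⟩ := Nat.exists_eq_add_of_lt hk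
  rw [show 2 * (k + r + 1) - 1 - k = k + 2 * r + 1 by lia,
    show 2 * (k + r + 1) + d - (k + 2 * r + 1) = k + 1 + d by lia,
    show 2 * (k + r + 1) - 1 = 2 * k + 2 * r + 1 by lia,
    show 2 * (k + r + 1) + d - (k + r + 1) + 1 = k + r + d + 2 by lia, le_max_iff]
  -- Twice the left-hand side, as a quadratic, has slope `2 * d + 1 - (k + 4 * r)` from `0` to `k`;
  -- if this is nonnegative, so is the slope from `k` to `t - 1`, by convexity.
  obtain hslope | hslope := le_total (2 * d + 1) (k + 4 * r)
  · left
    qify at hslope ⊢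
    simp only [Nat.cast_choose_two]
    push_cast
    nlinarith [mul_le_mul_of_nonneg_left hslope k.cast_nonneg]
  · right
    refine Nat.le_sub_of_add_le ?_
    qify at hslope ⊢
    simp only [Nat.cast_choose_two]
    push_cast
    nlinarith [mul_le_mul_of_nonneg_left hslope r.cast_nonneg]

lemma card_le_of_not_hasMatching_of_two_mul_le (hn : 2 * t ≤ n) {𝒜 : Finset (Finset (Fin n))}
    (hsized : (𝒜 : Set (Finset (Fin n))).Sized 2) (h : ¬ HasMatching 𝒜 t) :
    #𝒜 ≤ max ((2 * t - 1).choose 2) (n.choose 2 - (n - t + 1).choose 2) := by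
  obtain ⟨ℬ, ⟨hcard, hsized, h⟩, hshifted⟩ := exists_isShifted
    (P := fun ℬ ↦ #ℬ = #𝒜 ∧ (ℬ : Set (Finset (Fin n))).Sized 2 ∧ ¬ HasMatching ℬ t)
    (fun ℬ i j ⟨hcard, hsized, h⟩ ↦
      ⟨(card_compression _ _ _).trans hcard, hsized.uvCompression rfl, mt .of_compression h⟩)
    ⟨rfl, hsized, h⟩
  obtain ⟨c, d, hct, hd, hmem⟩ := exists_nested_pair_notMem hn h
  have hcd : c < d := by lia
  calc
    #𝒜 = #ℬ := hcard.symm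
    _ ≤ (#(Iio d)).choose 2 + #(Iio c) * #(Ici d) :=
      hshifted.card_le_of_pair_notMem hsized hcd hmem
    _ = (2 * t - 1 - c).choose 2 + c * (n - (2 * t - 1 - c)) := by
      rw [Fin.card_Iio, Fin.card_Iio, Fin.card_Ici, hd]
    _ ≤ _ := choose_two_add_mul_le_max hct hn

theorem card_le_of_not_hasMatching {α : Type*} [Fintype α] {𝒜 : Finset (Finset α)}
    (hsized : (𝒜 : Set (Finset α)).Sized 2) (h : ¬ HasMatching 𝒜 t) :
    #𝒜 ≤ max ((2 * t - 1).choose 2)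
      ((Fintype.card α).choose 2 - (Fintype.card α - t + 1).choose 2) := by
  obtain hlt | hle := lt_or_ge (Fintype.card α) (2 * t)
  · exact le_max_of_le_left (hsized.card_le.trans (Nat.choose_le_choose 2 (by lia)))
  let e : α ≃ Fin (Fintype.card α) := Fintype.equivFin α
  rw [← card_map (mapEmbedding e.toEmbedding).toEmbedding]
  refine card_le_of_not_hasMatching_of_two_mul_le hle ?_ (mt ?_ h)
  · simpa [Set.Sized] using hsized
  · rintro ⟨ℳ, hℳ, rfl, hdisj⟩
    refine hasMatching_of_map_mem e.symm.toEmbedding hdisj fun f hf ↦ ?_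
    obtain ⟨f, hf𝒜, rfl⟩ := mem_map.1 (hℳ hf)
    simpa [map_map] using hf𝒜

end Extremal

section Graph

variable {V : Type*} [DecidableEq V] (G : SimpleGraph V) [Fintype G.edgeSet]

/-- The edges of a graph as a family of two-element sets of vertices. -/
def edgeFamily : Finset (Finset V) :=
  G.edgeFinset.image Sym2.toFinset

variable {G}

lemma mem_edgeFamily {e : Finset V} : e ∈ edgeFamily G ↔ ∃ a b, G.Adj a b ∧ {a, b} = e := by
  simp [edgeFamily, Sym2.exists, Sym2.toFinset_mk_eq]

lemma card_edgeFamily : #(edgeFamily G) = G.edgeSet.ncard := by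
  have hinj : Function.Injective (Sym2.toFinset (α := V)) := fun e f hef ↦
    Sym2.ext fun x ↦ by rw [← Sym2.mem_toFinset, hef, Sym2.mem_toFinset]
  rw [edgeFamily, card_image_of_injective _ hinj, ← SimpleGraph.coe_edgeFinset,
    Set.ncard_coe_finset]

lemma sized_edgeFamily : (edgeFamily G : Set (Finset V)).Sized 2 := by
  intro e he
  obtain ⟨a, b, hab, rfl⟩ := mem_edgeFamily.1 he
  exact card_pair hab.ne

lemma HasMatching.exists_pairs {t : ℕ} (h : HasMatching (edgeFamily G) t) :
    ∃ M : Finset (V × V), #M = t ∧ (∀ p ∈ M, G.Adj p.1 p.2) ∧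
      ∀ p ∈ M, ∀ q ∈ M, p ≠ q → p.1 ≠ q.1 ∧ p.1 ≠ q.2 ∧ p.2 ≠ q.1 ∧ p.2 ≠ q.2 := by
  obtain ⟨ℳ, hℳ, rfl, hdisj⟩ := h
  have hsurj : Set.SurjOn (fun p : V × V ↦ {p.1, p.2}) {p | G.Adj p.1 p.2} ℳ := fun e he ↦
    have ⟨a, b, hab, hpair⟩ := mem_edgeFamily.1 (hℳ he)
    ⟨(a, b), hab, hpair⟩
  obtain ⟨M, hadj, hinj, rfl⟩ := exists_subset_injOn_image_eq_of_surjOn _ ℳ hsurj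
  refine ⟨M, (card_image_of_injOn hinj).symm, fun p hp ↦ hadj hp, fun p hp q hq hpq ↦ ?_⟩
  have hpq := hdisj (mem_image_of_mem _ hp) (mem_image_of_mem _ hq) (hinj.ne hp hq hpq)
  simp only [Function.onFun, id, disjoint_insert_left, disjoint_singleton_left, mem_insert,
    mem_singleton, not_or] at hpq
  exact and_assoc.1 hpq

end Graph

end ErdosGallai

theorem stmt_9_general {V : Type*} [Fintype V] (t : ℕ) (G : SimpleGraph V)
    (h : max ((2 * t - 1).choose 2)
      ((Fintype.card V).choose 2 - (Fintype.card V - t + 1).choose 2) < G.edgeSet.ncard) :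
    ∃ M : Finset (V × V), M.card = t ∧
      (∀ p ∈ M, G.Adj p.1 p.2) ∧
      (∀ p ∈ M, ∀ q ∈ M, p ≠ q →
        p.1 ≠ q.1 ∧ p.1 ≠ q.2 ∧ p.2 ≠ q.1 ∧ p.2 ≠ q.2) := by
  classical
  have hmatching : ErdosGallai.HasMatching (ErdosGallai.edgeFamily G) t := by
    by_contra hmatching
    have hcard := ErdosGallai.card_le_of_not_hasMatching ErdosGallai.sized_edgeFamily hmatching
    exact (ErdosGallai.card_edgeFamily (G := G) ▸ hcard).not_gt h
  exact hmatching.exists_pairs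

/-- Erdős–Gallai: a graph on `n` vertices with more than
`max (C(2t-1,2)) (C(n,2) - C(n-t+1,2))` edges contains a matching of size `t`. -/
theorem stmt_9 (n t : ℕ) (G : SimpleGraph (Fin n))
    (h : max ((2 * t - 1).choose 2) (n.choose 2 - (n - t + 1).choose 2) < G.edgeSet.ncard) :
    ∃ M : Finset (Fin n × Fin n), M.card = t ∧
      (∀ p ∈ M, G.Adj p.1 p.2) ∧
      (∀ p ∈ M, ∀ q ∈ M, p ≠ q →
        p.1 ≠ q.1 ∧ p.1 ≠ q.2 ∧ p.2 ≠ q.1 ∧ p.2 ≠ q.2) :=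
  stmt_9_general t G (by rwa [Fintype.card_fin])
end
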